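/- Let (Ω, P) be a probability space, e : Ω → ℂ^M a measurable random vector, and 0 ≤ ρ ≤ 1. Let Q ∈ ℂ^{M×M} be Hermitian, r ∈ ℂ^M, s ∈ ℝ, and d ≥ 0. Suppose P({ω : ‖e(ω)‖ ≤ d}) ≥ 1 − ρ and there exists μ ≥ 0 such that the block matrix B(Q,r,s,μ,d) = [[Q + μ I_M, r],[rᴴ, s − μ d²]] is positive semidefinite. Then P({ω : f_{Q,r,s}(e(ω)) ≥ 0}) ≥ 1 − ρ. -/

import Mathlib

open MeasureTheory Matrix ComplexOrder

/-!
Evaluating a positive semidefinite `B(Q, r, s, μ, d)` at the homogenised vector `(x, 1)` gives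
`f(x) + μ (‖x‖² - d²) ≥ 0`, where `f` is the quadratic function with coefficients `Q, r, s`. Since
`μ ≥ 0`, this forces `f(x) ≥ 0` on the ball `‖x‖ ≤ d`. Hence the event `‖e‖ ≤ d` is contained in
the event `f(e) ≥ 0`.
-/

section SProcedure

variable {𝕜 n : Type*} [RCLike 𝕜] [Fintype n]

/-- The quadratic function `f_{A,r,c}(x) = Re (xᴴ A x) + 2 Re (xᴴ r) + c`; the quadratic
term enters through its real part, which is the whole term when `A` is Hermitian. -/
def quadraticFun (A : Matrix n n 𝕜) (r : n → 𝕜) (c : ℝ) (x : n → 𝕜) : ℝ :=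
  RCLike.re (star x ⬝ᵥ A *ᵥ x) + 2 * RCLike.re (star x ⬝ᵥ r) + c

/-- The block matrix `[[A, r], [rᴴ, c]]` that homogenises `quadraticFun A r c`. The matrix
`B(Q, r, s, μ, d)` is `borderedMatrix (Q + μ • 1) r (s - μ * d ^ 2)`. -/
def borderedMatrix (A : Matrix n n 𝕜) (r : n → 𝕜) (c : ℝ) : Matrix (n ⊕ Unit) (n ⊕ Unit) 𝕜 :=
  fromBlocks A (replicateCol Unit r) (replicateRow Unit (star r)) (of fun _ _ => (c : 𝕜))

lemma re_star_dotProduct_comm (x y : n → 𝕜) :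
    RCLike.re (star x ⬝ᵥ y) = RCLike.re (star y ⬝ᵥ x) := by
  rw [star_dotProduct, dotProduct_comm, RCLike.star_def, RCLike.conj_re]

lemma re_star_dotProduct_self (x : n → 𝕜) :
    RCLike.re (star x ⬝ᵥ x) = ‖WithLp.toLp 2 x‖ ^ 2 := by
  rw [@norm_sq_eq_re_inner 𝕜, EuclideanSpace.inner_toLp_toLp, dotProduct_comm]

lemma borderedMatrix_mulVec_sumElim_one (A : Matrix n n 𝕜) (r : n → 𝕜) (c : ℝ) (x : n → 𝕜) :
    borderedMatrix A r c *ᵥ Sum.elim x 1 = Sum.elim (A *ᵥ x + r) (fun _ => star r ⬝ᵥ x + c) := by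
  have col_mulVec_one : replicateCol Unit r *ᵥ 1 = r := by
    ext i
    simp [mulVec, dotProduct]
  have corner_mulVec_one : (of fun _ _ : Unit => (c : 𝕜)) *ᵥ 1 = fun _ => (c : 𝕜) := by
    ext i
    simp [mulVec, dotProduct]
  rw [borderedMatrix, fromBlocks_mulVec, Sum.elim_comp_inl, Sum.elim_comp_inr, col_mulVec_one,
    corner_mulVec_one, replicateRow_mulVec_eq_const]
  rfl

lemma re_star_dotProduct_borderedMatrix_mulVec (A : Matrix n n 𝕜) (r : n → 𝕜) (c : ℝ)
    (x : n → 𝕜) :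
    RCLike.re (star (Sum.elim x 1) ⬝ᵥ borderedMatrix A r c *ᵥ Sum.elim x 1) =
      quadraticFun A r c x := by
  rw [borderedMatrix_mulVec_sumElim_one, Function.star_sumElim, star_one,
    sumElim_dotProduct_sumElim, dotProduct_add, one_dotProduct, Fintype.sum_unique]
  simp only [map_add, RCLike.ofReal_re, quadraticFun, re_star_dotProduct_comm r x]
  ring

lemma quadraticFun_nonneg_of_posSemidef {A : Matrix n n 𝕜} {r : n → 𝕜} {c : ℝ}
    (h : (borderedMatrix A r c).PosSemidef) (x : n → 𝕜) : 0 ≤ quadraticFun A r c x := by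
  rw [← re_star_dotProduct_borderedMatrix_mulVec]
  exact h.re_dotProduct_nonneg _

variable [DecidableEq n]

lemma quadraticFun_add_smul_one (Q : Matrix n n 𝕜) (r : n → 𝕜) (s μ d : ℝ) (x : n → 𝕜) :
    quadraticFun (Q + (μ : 𝕜) • 1) r (s - μ * d ^ 2) x =
      quadraticFun Q r s x + μ * (‖WithLp.toLp 2 x‖ ^ 2 - d ^ 2) := by
  simp only [quadraticFun, add_mulVec, smul_mulVec, one_mulVec, dotProduct_add, dotProduct_smul,
    smul_eq_mul, map_add, RCLike.re_ofReal_mul, re_star_dotProduct_self]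
  ring

lemma quadraticFun_nonneg_of_norm_le {Q : Matrix n n 𝕜} {r : n → 𝕜} {s μ d : ℝ} (hμ : 0 ≤ μ)
    (hB : (borderedMatrix (Q + (μ : 𝕜) • 1) r (s - μ * d ^ 2)).PosSemidef) {x : n → 𝕜}
    (hx : ‖WithLp.toLp 2 x‖ ≤ d) : 0 ≤ quadraticFun Q r s x := by
  have penalised_nonneg : 0 ≤ quadraticFun Q r s x + μ * (‖WithLp.toLp 2 x‖ ^ 2 - d ^ 2) :=
    quadraticFun_add_smul_one Q r s μ d x ▸ quadraticFun_nonneg_of_posSemidef hB x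
  have penalty_nonpos : μ * (‖WithLp.toLp 2 x‖ ^ 2 - d ^ 2) ≤ 0 :=
    mul_nonpos_of_nonneg_of_nonpos hμ (sub_nonpos.2 (by gcongr))
  linarith

theorem stmt_4_general {Ω : Type*} [MeasurableSpace Ω] (P : Measure Ω) (e : Ω → n → 𝕜)
    {Q : Matrix n n 𝕜} {r : n → 𝕜} {s d : ℝ}
    (hB : ∃ μ : ℝ, 0 ≤ μ ∧ (borderedMatrix (Q + (μ : 𝕜) • 1) r (s - μ * d ^ 2)).PosSemidef) :
    P {ω | ‖WithLp.toLp 2 (e ω)‖ ≤ d} ≤ P {ω | 0 ≤ quadraticFun Q r s (e ω)} := by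
  obtain ⟨μ, hμ, hB⟩ := hB
  exact measure_mono fun ω hω => quadraticFun_nonneg_of_norm_le hμ hB hω

end SProcedure

theorem stmt_4 {Ω : Type*} [MeasurableSpace Ω] (P : Measure Ω) [IsProbabilityMeasure P]
    {M : ℕ} (e : Ω → (Fin M → ℂ)) (he : Measurable e)
    (ρ : ℝ) (hρ0 : 0 ≤ ρ) (hρ1 : ρ ≤ 1)
    (Q : Matrix (Fin M) (Fin M) ℂ) (hQ : Q.IsHermitian)
    (r : Fin M → ℂ) (s d : ℝ) (hd : 0 ≤ d)
    (hPd : ENNReal.ofReal (1 - ρ) ≤ P {ω | ‖(EuclideanSpace.equiv (Fin M) ℂ).symm (e ω)‖ ≤ d})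
    (hB : ∃ μ : ℝ, 0 ≤ μ ∧
      (Matrix.fromBlocks (Q + (μ : ℂ) • 1) (Matrix.of fun i (_ : Unit) => r i)
        (Matrix.of fun (_ : Unit) j => star (r j))
        (Matrix.of fun (_ : Unit) (_ : Unit) => ((s - μ * d ^ 2 : ℝ) : ℂ))).PosSemidef) :
    ENNReal.ofReal (1 - ρ) ≤
      P {ω | 0 ≤ (star (e ω) ⬝ᵥ Q.mulVec (e ω)).re + 2 * (star (e ω) ⬝ᵥ r).re + s} :=
  hPd.trans (stmt_4_general P e hB)
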